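/- Suppose k ≥ 1 and d ≥ 2, and suppose there exists a stabilizer group G ⊆ P_n with parameters [[n,k,d;3]] (i.e., dim G = n − k, d(G) = d, and W(G) = 3). Then d = 2 and 4k ≤ n (the code rate satisfies k/n ≤ 1/4). -/

import Mathlib

open scoped Classical

noncomputable section

/-- Pauli strings modulo phase, indexed by a finite type. -/
abbrev PauliT (ι : Type) : Type := ι → ZMod 2 × ZMod 2

abbrev Pauli (n : ℕ) : Type := PauliT (Fin n)

variable {ι : Type} [Fintype ι]

/-- Weight of a Pauli string. -/
def wt (v : PauliT ι) : ℕ := (Finset.univ.filter fun i => v i ≠ 0).card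

/-- Support of a Pauli string. -/
def suppF (v : PauliT ι) : Finset ι := Finset.univ.filter fun i => v i ≠ 0

/-- Symplectic form encoding commutation. -/
def sympl (u v : PauliT ι) : ZMod 2 :=
  ∑ i, ((u i).1 * (v i).2 + (u i).2 * (v i).1)

/-- `G` is a stabilizer group (isotropic subspace). -/
def IsStabilizer (G : Submodule (ZMod 2) (PauliT ι)) : Prop :=
  ∀ u ∈ G, ∀ v ∈ G, sympl u v = 0

/-- Membership in the symplectic dual `G^⊥`. -/
def inDual (G : Submodule (ZMod 2) (PauliT ι)) (v : PauliT ι) : Prop :=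
  ∀ g ∈ G, sympl v g = 0

/-- Distance: minimum weight of an element of `G^⊥ \ G`, `⊤` if none exists. -/
def distG (G : Submodule (ZMod 2) (PauliT ι)) : ℕ∞ :=
  sInf ((fun v => (wt v : ℕ∞)) '' {v | inDual G v ∧ v ∉ G})

/-- `g` is an `𝔽₂`-basis (indexed family) of `G`. -/
def IsBasisFam {r : ℕ} (G : Submodule (ZMod 2) (PauliT ι)) (g : Fin r → PauliT ι) : Prop :=
  LinearIndependent (ZMod 2) g ∧ Submodule.span (ZMod 2) (Set.range g) = G

/-- The weight of a stabilizer group: optimal maximum generator weight over bases. -/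
def Wgt (G : Submodule (ZMod 2) (PauliT ι)) : ℕ∞ :=
  ⨅ (r : ℕ) (g : Fin r → PauliT ι) (_ : IsBasisFam G g),
    Finset.univ.sup fun i => (wt (g i) : ℕ∞)

/-- Optimal weight over all `[[n,k,d]]` stabilizer codes. -/
def Wopt (n k : ℕ) (d : ℕ∞) : ℕ∞ :=
  ⨅ (G : Submodule (ZMod 2) (Pauli n))
    (_ : IsStabilizer G ∧ Module.finrank (ZMod 2) ↥G = n - k ∧ distG G = d),
    Wgt G

/-- Weight enumerator: number of elements of `G` of weight `j`. -/
def Aj (G : Submodule (ZMod 2) (PauliT ι)) (j : ℕ) : ℕ :=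
  Nat.card {g : PauliT ι // g ∈ G ∧ wt g = j}

/-- A weight-optimal generating set. -/
def IsWeightOptimalBasis {r : ℕ} (G : Submodule (ZMod 2) (PauliT ι))
    (g : Fin r → PauliT ι) : Prop :=
  IsBasisFam G g ∧ Monotone (fun i => wt (g i)) ∧
    ∀ h : Fin r → PauliT ι, IsBasisFam G h → Monotone (fun i => wt (h i)) →
      ∀ i, wt (g i) ≤ wt (h i)

/-- Set of average generator weights over all bases of `G`. -/
def WavgSet (G : Submodule (ZMod 2) (PauliT ι)) : Set ℚ :=
  {x | ∃ (r : ℕ) (g : Fin r → PauliT ι), IsBasisFam G g ∧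
        x = (∑ i, (wt (g i) : ℚ)) / (r : ℚ)}

/-- Splitting of Pauli strings along a bipartition given by a predicate. -/
def splitEquiv (p : ι → Prop) :
    PauliT ι ≃ₗ[ZMod 2] PauliT {x // p x} × PauliT {x // ¬ p x} :=
  (LinearEquiv.funCongrLeft (ZMod 2) (ZMod 2 × ZMod 2) (Equiv.sumCompl p)).trans
    (LinearEquiv.sumArrowLequivProdArrow _ _ _ _)

/-- Tensor product of subspaces along a bipartition. -/
def tensorAlong (p : ι → Prop)
    (GA : Submodule (ZMod 2) (PauliT {x // p x}))
    (GB : Submodule (ZMod 2) (PauliT {x // ¬ p x})) :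
    Submodule (ZMod 2) (PauliT ι) :=
  (GA.prod GB).comap (splitEquiv p).toLinearMap

/-- Decomposability as a tensor product over a nontrivial bipartition. -/
def Decomposable (G : Submodule (ZMod 2) (PauliT ι)) : Prop :=
  ∃ p : ι → Prop, (∃ x, p x) ∧ (∃ x, ¬ p x) ∧
    ∃ (GA : Submodule (ZMod 2) (PauliT {x // p x}))
      (GB : Submodule (ZMod 2) (PauliT {x // ¬ p x})),
      G = tensorAlong p GA GB

/-- Identification of `Pauli (n₁+n₂)` with `Pauli n₁ × Pauli n₂`. -/
def pauliSumEquiv (n₁ n₂ : ℕ) :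
    Pauli (n₁ + n₂) ≃ₗ[ZMod 2] Pauli n₁ × Pauli n₂ :=
  (LinearEquiv.funCongrLeft (ZMod 2) (ZMod 2 × ZMod 2) finSumFinEquiv).trans
    (LinearEquiv.sumArrowLequivProdArrow _ _ _ _)

/-- Tensor product of stabilizer subspaces on `n₁` and `n₂` qubits. -/
def tensorFin {n₁ n₂ : ℕ} (G₁ : Submodule (ZMod 2) (Pauli n₁))
    (G₂ : Submodule (ZMod 2) (Pauli n₂)) :
    Submodule (ZMod 2) (Pauli (n₁ + n₂)) :=
  (G₁.prod G₂).comap (pauliSumEquiv n₁ n₂).toLinearMap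

/-!
Among the bases of `G` by elements of weight at most three take one, `g`, of minimal total weight,
and let `r` be its size. As `d ≥ 2`, on every qubit that carries no generator of weight one any
single-qubit error is seen by some generator.

The theorem follows by discharging. Every generator distributes a charge of at most `6` over its
support, so the total charge is at most `6 * r`. A qubit receives at least `6`, unless it is
deficient: it meets exactly two generators, both of weight three, and receives `4`. These two
generators anticommute at the deficient qubit, hence also at a second qubit, its partner. If every
deficient qubit borrows `1 / 2` from its partner, all qubits are left with at least `9 / 2`, so
`3 * n ≤ 4 * r = 4 * (n - k)`. If `d ≥ 3`, a generator meets at most one deficient qubit and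
partners meet at least four generators; then a deficient qubit can borrow `2` and all qubits are
left with at least `6`, so `n ≤ r`, which contradicts `k ≥ 1`.
-/

section WeightThree

open Finset

variable {κ : Type*}

/-! ### Spanning families minimizing a weight -/

section MinimalFamily

variable [Fintype κ] {K M : Type*} [DivisionRing K] [AddCommGroup M] [Module K M]

theorem span_range_update_sum_smul {c : κ → K} {s : κ} (hc : c s ≠ 0) (v : κ → M) :
    Submodule.span K (Set.range (Function.update v s (∑ t, c t • v t))) =
      Submodule.span K (Set.range v) := by
  set w := Function.update v s (∑ t, c t • v t) with hw
  have hvmem : ∀ t, v t ∈ Submodule.span K (Set.range v) := fun t =>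
    Submodule.subset_span ⟨t, rfl⟩
  have hwmem : ∀ t, w t ∈ Submodule.span K (Set.range w) := fun t =>
    Submodule.subset_span ⟨t, rfl⟩
  have hws : w s = c s • v s + ∑ t ∈ univ.erase s, c t • v t := by
    rw [hw, Function.update_self, add_sum_erase univ (fun t => c t • v t) (mem_univ s)]
  have hwv : ∀ t ≠ s, w t = v t := fun t hts => Function.update_of_ne hts _ v
  apply le_antisymm <;> rw [Submodule.span_le] <;> rintro _ ⟨t, rfl⟩ <;>
    by_cases hts : t = s
  · rw [hts, hw, Function.update_self]
    exact sum_mem fun t _ => Submodule.smul_mem _ _ (hvmem t)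
  · exact hwv t hts ▸ hvmem t
  · have hsolve : c s • v s = w s - ∑ t ∈ univ.erase s, c t • w t := by
      rw [eq_sub_iff_add_eq, hws]
      exact congrArg _ (sum_congr rfl fun t ht => by rw [hwv t (ne_of_mem_erase ht)])
    rw [hts, SetLike.mem_coe, ← Submodule.smul_mem_iff _ hc, hsolve]
    exact sub_mem (hwmem s) (sum_mem fun t _ => Submodule.smul_mem _ _ (hwmem t))
  · exact hwv t hts ▸ hwmem t

theorem exists_span_eq_and_forall_le_sum_smul (f : M → ℕ) (v₀ : κ → M) :
    ∃ v : κ → M, Submodule.span K (Set.range v) = Submodule.span K (Set.range v₀) ∧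
      (∀ s, f (v s) ≤ f (v₀ s)) ∧
      ∀ (c : κ → K) (s : κ), c s ≠ 0 → f (v s) ≤ f (∑ t, c t • v t) := by
  obtain ⟨v, ⟨hspan, hle⟩, hmin⟩ := exists_minimalFor_of_wellFoundedLT
    (fun v : κ → M => Submodule.span K (Set.range v) = Submodule.span K (Set.range v₀) ∧
      ∀ s, f (v s) ≤ f (v₀ s))
    (fun v => ∑ s, f (v s)) ⟨v₀, rfl, fun _ => le_rfl⟩
  refine ⟨v, hspan, hle, fun c s hc => ?_⟩
  by_contra! hlt
  set w := Function.update v s (∑ t, c t • v t) with hw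
  have hws : f (w s) < f (v s) := by rwa [hw, Function.update_self]
  have hwv : ∀ t, f (w t) ≤ f (v t) := fun t => by
    by_cases hts : t = s
    · exact hts ▸ hws.le
    · rw [hw, Function.update_of_ne hts]
  have hsum : ∑ t, f (w t) < ∑ t, f (v t) :=
    sum_lt_sum (fun t _ => hwv t) ⟨s, mem_univ s, hws⟩
  exact hsum.not_ge (hmin ⟨(span_range_update_sum_smul hc v).trans hspan,
    fun t => (hwv t).trans (hle t)⟩ hsum.le)

end MinimalFamily

/-! ### Single-qubit Pauli operators -/

/-- The symplectic form on one qubit: it vanishes iff the two Pauli operators commute. -/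
def localSympl (a b : ZMod 2 × ZMod 2) : ZMod 2 := a.1 * b.2 + a.2 * b.1

theorem localSympl_self : ∀ a, localSympl a a = 0 := by decide

theorem localSympl_zero_left : ∀ a, localSympl 0 a = 0 := by decide

theorem localSympl_zero_right : ∀ a, localSympl a 0 = 0 := by decide

theorem localSympl_comm : ∀ a b, localSympl a b = localSympl b a := by decide

theorem localSympl_add_left :
    ∀ a b c, localSympl (a + b) c = localSympl a c + localSympl b c := by decide

theorem localSympl_smul_left :
    ∀ (r : ZMod 2) (a b), localSympl (r • a) b = r * localSympl a b := by decide

theorem left_ne_zero_of_localSympl_ne_zero : ∀ {a b}, localSympl a b ≠ 0 → a ≠ 0 := by decide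

theorem right_ne_zero_of_localSympl_ne_zero : ∀ {a b}, localSympl a b ≠ 0 → b ≠ 0 := by decide

theorem eq_of_localSympl_eq_zero :
    ∀ {a b}, a ≠ 0 → b ≠ 0 → localSympl a b = 0 → a = b := by decide

theorem localSympl_ne_zero_or_of_ne_zero :
    ∀ {a b c}, localSympl a b ≠ 0 → c ≠ 0 → localSympl a c ≠ 0 ∨ localSympl b c ≠ 0 := by decide

theorem eq_add_of_localSympl_ne_zero :
    ∀ {a b c}, localSympl a b ≠ 0 → localSympl a c ≠ 0 → localSympl b c ≠ 0 → c = a + b := by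
  decide

theorem exists_localSympl_eq_and_eq :
    ∀ {a b}, localSympl a b ≠ 0 → ∀ x y, ∃ p, localSympl p a = x ∧ localSympl p b = y := by decide

theorem zmod_two_add_eq_zero : ∀ {x y : ZMod 2}, x ≠ 0 → y ≠ 0 → x + y = 0 := by decide

/-! ### Supports and the symplectic form -/

theorem mem_suppF {v : PauliT ι} {i : ι} : i ∈ suppF v ↔ v i ≠ 0 := by
  simp [suppF]

theorem card_suppF (v : PauliT ι) : #(suppF v) = wt v := rfl

theorem wt_pos_of_apply_ne_zero {v : PauliT ι} {i : ι} (hv : v i ≠ 0) : 0 < wt v :=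
  card_pos.2 ⟨i, mem_suppF.2 hv⟩

theorem wt_le_card {v : PauliT ι} {S : Finset ι} (hS : ∀ i ∉ S, v i = 0) : wt v ≤ #S :=
  card_le_card fun i hi => by_contra fun hiS => mem_suppF.1 hi (hS i hiS)

theorem suppF_eq_of_wt_le_card {v : PauliT ι} {S : Finset ι} (hS : ∀ i ∈ S, v i ≠ 0)
    (hv : wt v ≤ #S) : suppF v = S :=
  (eq_of_subset_of_card_le (fun i hi => mem_suppF.2 (hS i hi)) hv).symm

theorem exists_ne_ne_apply_ne_zero {v : PauliT ι} (hv : 3 ≤ wt v) (i j : ι) :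
    ∃ a, a ≠ i ∧ a ≠ j ∧ v a ≠ 0 := by
  obtain ⟨a, ha, haij⟩ : ∃ a ∈ suppF v, a ∉ ({i, j} : Finset ι) :=
    exists_mem_notMem_of_card_lt_card (card_le_two.trans_lt hv)
  simp only [mem_insert, mem_singleton, not_or] at haij
  exact ⟨a, haij.1, haij.2, mem_suppF.1 ha⟩

theorem sympl_eq_sum_localSympl (u v : PauliT ι) :
    sympl u v = ∑ i, localSympl (u i) (v i) := rfl

theorem sympl_comm (u v : PauliT ι) : sympl u v = sympl v u :=
  sum_congr rfl fun _ _ => localSympl_comm _ _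

theorem sympl_add_left (u v w : PauliT ι) : sympl (u + v) w = sympl u w + sympl v w := by
  simp only [sympl_eq_sum_localSympl, Pi.add_apply, localSympl_add_left, sum_add_distrib]

theorem sympl_smul_left (c : ZMod 2) (u v : PauliT ι) : sympl (c • u) v = c * sympl u v := by
  simp only [sympl_eq_sum_localSympl, Pi.smul_apply, localSympl_smul_left, mul_sum]

theorem sympl_eq_sum_of_suppF_subset {u : PauliT ι} {S : Finset ι} (hS : suppF u ⊆ S)
    (v : PauliT ι) : sympl u v = ∑ i ∈ S, localSympl (u i) (v i) := by
  refine (sum_subset (subset_univ S) fun i _ hi => ?_).symm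
  have hui : u i = 0 := by_contra fun h => hi (hS (mem_suppF.2 h))
  change localSympl (u i) (v i) = 0
  rw [hui, localSympl_zero_left]

theorem suppF_single_subset (i : ι) (p : ZMod 2 × ZMod 2) :
    suppF (Pi.single i p : PauliT ι) ⊆ {i} := fun l hl => by
  by_contra hli
  exact mem_suppF.1 hl (by rw [Pi.single_eq_of_ne (notMem_singleton.1 hli)])

theorem sympl_single_left (i : ι) (p : ZMod 2 × ZMod 2) (v : PauliT ι) :
    sympl (Pi.single i p) v = localSympl p (v i) := by
  rw [sympl_eq_sum_of_suppF_subset (suppF_single_subset i p), sum_singleton, Pi.single_eq_same]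

theorem sympl_eq_add_add_of_wt_le_three {u : PauliT ι} {i j a : ι} (hu : wt u ≤ 3)
    (hij : i ≠ j) (hai : a ≠ i) (haj : a ≠ j) (hi : u i ≠ 0) (hj : u j ≠ 0) (ha : u a ≠ 0)
    (v : PauliT ι) :
    sympl u v =
      localSympl (u i) (v i) + localSympl (u j) (v j) + localSympl (u a) (v a) := by
  have hcard : #({i, j, a} : Finset ι) = 3 :=
    card_eq_three.2 ⟨i, j, a, hij, hai.symm, haj.symm, rfl⟩
  have hsupp : suppF u = {i, j, a} :=
    suppF_eq_of_wt_le_card (by simp [hi, hj, ha]) (hu.trans hcard.ge)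
  rw [sympl_eq_sum_of_suppF_subset hsupp.subset, sum_insert (by simp [hij, hai.symm]),
    sum_pair haj.symm, add_assoc]

theorem inDual_span_range {g : κ → PauliT ι} {x : PauliT ι} (hx : ∀ s, sympl (g s) x = 0) :
    inDual (Submodule.span (ZMod 2) (Set.range g)) x := by
  intro y hy
  rw [sympl_comm]
  induction hy using Submodule.span_induction with
  | mem y hy =>
    obtain ⟨s, rfl⟩ := hy
    exact hx s
  | zero => simp [sympl]
  | add u v _ _ hu hv => rw [sympl_add_left, hu, hv, add_zero]
  | smul c u _ hu => rw [sympl_smul_left, hu, mul_zero]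

theorem mem_of_inDual_of_wt_lt_distG {G : Submodule (ZMod 2) (PauliT ι)} {x : PauliT ι}
    (hx : inDual G x) (hwt : (wt x : ℕ∞) < distG G) : x ∈ G :=
  by_contra fun hxG => hwt.not_ge (sInf_le ⟨x, ⟨hx, hxG⟩, rfl⟩)

/-! ### Links -/

section Link

variable {α : Type} [Fintype κ] {g : κ → PauliT α} {i j : α} {s t u : κ}

/-- The members of `g` acting nontrivially on qubit `i`. -/
def generatorsAt (g : κ → PauliT α) (i : α) : Finset κ := {s | g s i ≠ 0}

theorem mem_generatorsAt : s ∈ generatorsAt g i ↔ g s i ≠ 0 := by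
  simp [generatorsAt]

/-- Qubit `i` meets exactly two generators `s` and `t`, and these anticommute locally both at `i`
and at a further qubit `j`. -/
structure IsLink (g : κ → PauliT α) (i j : α) (s t : κ) : Prop where
  ne : i ≠ j
  generatorsAt_eq : generatorsAt g i = {s, t}
  localSympl_left : localSympl (g s i) (g t i) ≠ 0
  localSympl_right : localSympl (g s j) (g t j) ≠ 0

namespace IsLink

theorem symm (h : IsLink g i j s t) : IsLink g i j t s :=
  ⟨h.ne, h.generatorsAt_eq.trans (pair_comm s t), by rw [localSympl_comm]; exact h.localSympl_left,
    by rw [localSympl_comm]; exact h.localSympl_right⟩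

theorem generator_ne (h : IsLink g i j s t) : s ≠ t := by
  rintro rfl
  exact h.localSympl_left (localSympl_self _)

theorem card_generatorsAt (h : IsLink g i j s t) : #(generatorsAt g i) = 2 := by
  rw [h.generatorsAt_eq, card_pair h.generator_ne]

theorem apply_left_ne_zero (h : IsLink g i j s t) : g s i ≠ 0 :=
  left_ne_zero_of_localSympl_ne_zero h.localSympl_left

theorem apply_right_ne_zero (h : IsLink g i j s t) : g s j ≠ 0 :=
  left_ne_zero_of_localSympl_ne_zero h.localSympl_right

theorem eq_or_eq (h : IsLink g i j s t) (hu : g u i ≠ 0) : u = s ∨ u = t := by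
  simpa [h.generatorsAt_eq] using mem_generatorsAt.2 hu

theorem apply_left_eq_zero (h : IsLink g i j s t) (hus : u ≠ s) (hut : u ≠ t) : g u i = 0 :=
  by_contra fun hu => (h.eq_or_eq hu).elim hus hut

theorem localSympl_ne_zero_iff (h : IsLink g i j s t) :
    localSympl (g t i) (g u i) ≠ 0 ↔ u = s := by
  refine ⟨fun hu => ?_, fun hus => hus ▸ h.symm.localSympl_left⟩
  refine (h.eq_or_eq (right_ne_zero_of_localSympl_ne_zero hu)).resolve_right ?_
  rintro rfl
  exact hu (localSympl_self _)

theorem exists_of_apply_ne_zero (h : IsLink g i j s t) (hu : g u i ≠ 0) :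
    ∃ v, IsLink g i j u v := by
  rcases h.eq_or_eq hu with rfl | rfl
  exacts [⟨t, h⟩, ⟨s, h.symm⟩]

theorem generatorsAt_subset (h : IsLink g i j s t) : generatorsAt g i ⊆ generatorsAt g j := by
  intro u hu
  obtain ⟨v, huv⟩ := h.exists_of_apply_ne_zero (mem_generatorsAt.1 hu)
  exact mem_generatorsAt.2 huv.apply_right_ne_zero

end IsLink

theorem card_mul_two_le_of_isLink {F : Finset α} {B : ℕ}
    (hF : ∀ i ∈ F, ∃ s t, IsLink g i j s t)
    (hB : ∀ s ∈ generatorsAt g j, #{i ∈ F | g s i ≠ 0} ≤ B) :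
    #F * 2 ≤ #(generatorsAt g j) * B := by
  refine card_mul_le_card_mul (fun i s => g s i ≠ 0) (fun i hi => ?_) hB
  obtain ⟨s, t, h⟩ := hF i hi
  refine h.card_generatorsAt.ge.trans (card_le_card fun u hu => ?_)
  exact mem_filter.2 ⟨h.generatorsAt_subset hu, mem_generatorsAt.1 hu⟩

end Link

/-! ### Weight-reduced families -/

variable [Fintype κ]

/-- A commuting family of Pauli strings in which no member can be exchanged for a lighter element
of the span. -/
structure IsReducedFamily (g : κ → PauliT ι) : Prop where
  sympl_eq_zero : ∀ s t, sympl (g s) (g t) = 0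
  wt_le_wt_sum : ∀ (c : κ → ZMod 2) (s : κ), c s ≠ 0 → wt (g s) ≤ wt (∑ t, c t • g t)

/-- A reduced family of strings of weight at most three generating a stabilizer group of distance
at least two. -/
structure IsWeightThreeFamily (g : κ → PauliT ι) : Prop extends IsReducedFamily g where
  wt_le_three : ∀ s, wt (g s) ≤ 3
  two_le_distG : 2 ≤ distG (Submodule.span (ZMod 2) (Set.range g))

/-- Some member of `g` acts on qubit `i` and on no other qubit. -/
def IsPinned (g : κ → PauliT ι) (i : ι) : Prop := ∃ s, suppF (g s) = {i}

variable {g : κ → PauliT ι} {i j a : ι} {s t u v : κ}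

namespace IsReducedFamily

theorem exists_wt_le (hg : IsReducedFamily g) {x : PauliT ι}
    (hx : x ∈ Submodule.span (ZMod 2) (Set.range g)) (hxi : x i ≠ 0) :
    ∃ s, g s i ≠ 0 ∧ wt (g s) ≤ wt x := by
  obtain ⟨c, rfl⟩ := (Submodule.mem_span_range_iff_exists_fun _).1 hx
  rw [Finset.sum_apply] at hxi
  obtain ⟨s, -, hs⟩ := exists_ne_zero_of_sum_ne_zero hxi
  rw [Pi.smul_apply] at hs
  exact ⟨s, right_ne_zero_of_smul hs, hg.wt_le_wt_sum c s (left_ne_zero_of_smul hs)⟩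

theorem wt_le_wt_add (hg : IsReducedFamily g) (hst : s ≠ t) : wt (g s) ≤ wt (g s + g t) := by
  have hsum : ∑ x, (Pi.single s 1 + Pi.single t 1 : κ → ZMod 2) x • g x = g s + g t := by
    simp [add_smul, sum_add_distrib, Pi.single_apply]
  have hle := hg.wt_le_wt_sum (Pi.single s 1 + Pi.single t 1) s (by simp [hst])
  rwa [hsum] at hle

theorem eq_of_suppF_eq_singleton (hg : IsReducedFamily g) (ht : suppF (g t) = {i})
    (hs : g s i ≠ 0) : s = t := by
  by_contra hst
  have hti : g t i ≠ 0 := mem_suppF.1 (ht ▸ mem_singleton_self i)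
  have hti' : ∀ l ≠ i, g t l = 0 := fun l hl => by
    by_contra h
    exact hl (mem_singleton.1 (ht ▸ mem_suppF.2 h))
  have hcomm : localSympl (g s i) (g t i) = 0 := by
    rw [localSympl_comm, ← hg.sympl_eq_zero t s, sympl_eq_sum_of_suppF_subset ht.subset,
      sum_singleton]
  have heq : g s i = g t i := eq_of_localSympl_eq_zero hs hti hcomm
  have hlt : wt (g s + g t) < wt (g s) := by
    refine (wt_le_card fun l hl => ?_).trans_lt (card_erase_lt_of_mem (mem_suppF.2 hs))
    by_cases hli : l = i
    · rw [hli, Pi.add_apply, heq, CharTwo.add_self_eq_zero]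
    · simpa [hti' l hli, mem_suppF, hli] using hl
  exact hlt.not_ge (hg.wt_le_wt_add hst)

theorem not_isPinned_of_ne (hg : IsReducedFamily g) (hi : g s i ≠ 0) (ha : g s a ≠ 0)
    (hai : a ≠ i) : ¬ IsPinned g a := by
  rintro ⟨t, ht⟩
  obtain rfl := hg.eq_of_suppF_eq_singleton ht ha
  exact hai (mem_singleton.1 (ht ▸ mem_suppF.2 hi)).symm

theorem exists_localSympl_ne_zero (hg : IsReducedFamily g)
    (hd : 2 ≤ distG (Submodule.span (ZMod 2) (Set.range g))) (hi : ¬ IsPinned g i)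
    {p : ZMod 2 × ZMod 2} (hp : p ≠ 0) : ∃ s, localSympl p (g s i) ≠ 0 := by
  by_contra! hcomm
  have hwt : wt (Pi.single i p : PauliT ι) ≤ 1 := card_le_card (suppF_single_subset i p)
  have hmem : Pi.single i p ∈ Submodule.span (ZMod 2) (Set.range g) := by
    refine mem_of_inDual_of_wt_lt_distG (inDual_span_range fun s => ?_) ?_
    · rw [sympl_comm, sympl_single_left, hcomm]
    · exact lt_of_lt_of_le (by exact_mod_cast hwt.trans_lt one_lt_two) hd
  obtain ⟨s, hsi, hs⟩ := hg.exists_wt_le (i := i) hmem (by simpa using hp)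
  exact hi ⟨s, suppF_eq_of_wt_le_card (by simpa using hsi) (hs.trans hwt)⟩

theorem exists_localSympl_ne_zero_of_apply_ne_zero (hg : IsReducedFamily g)
    (hd : 2 ≤ distG (Submodule.span (ZMod 2) (Set.range g))) (hi : g s i ≠ 0) (ha : g s a ≠ 0)
    (hai : a ≠ i) : ∃ u, localSympl (g s a) (g u a) ≠ 0 :=
  hg.exists_localSympl_ne_zero hd (hg.not_isPinned_of_ne hi ha hai) ha

theorem two_le_card_generatorsAt (hg : IsReducedFamily g)
    (hd : 2 ≤ distG (Submodule.span (ZMod 2) (Set.range g))) (hi : ¬ IsPinned g i) :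
    2 ≤ #(generatorsAt g i) := by
  obtain ⟨s, hs⟩ := hg.exists_localSympl_ne_zero hd hi (p := (1, 0)) (by decide)
  have hsi := right_ne_zero_of_localSympl_ne_zero hs
  obtain ⟨t, hst⟩ := hg.exists_localSympl_ne_zero hd hi hsi
  refine one_lt_card.2 ⟨s, mem_generatorsAt.2 hsi, t,
    mem_generatorsAt.2 (right_ne_zero_of_localSympl_ne_zero hst), ?_⟩
  rintro rfl
  exact hst (localSympl_self _)

theorem exists_isLink (hg : IsReducedFamily g)
    (hd : 2 ≤ distG (Submodule.span (ZMod 2) (Set.range g))) (hi : #(generatorsAt g i) = 2) :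
    ∃ j s t, IsLink g i j s t := by
  obtain ⟨s, t, hst, hgen⟩ := card_eq_two.1 hi
  have hs : g s i ≠ 0 := mem_generatorsAt.1 (by simp [hgen])
  have ht : g t i ≠ 0 := mem_generatorsAt.1 (by simp [hgen])
  have hpin : ¬ IsPinned g i := fun ⟨v, hv⟩ =>
    hst ((hg.eq_of_suppF_eq_singleton hv hs).trans (hg.eq_of_suppF_eq_singleton hv ht).symm)
  have hanti : localSympl (g s i) (g t i) ≠ 0 := by
    intro hcomm
    obtain ⟨u, hu⟩ := hg.exists_localSympl_ne_zero hd hpin hs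
    have hut : u = s ∨ u = t := by
      simpa [hgen] using mem_generatorsAt.2 (right_ne_zero_of_localSympl_ne_zero hu)
    rcases hut with rfl | rfl
    exacts [hu (localSympl_self _), hu hcomm]
  obtain ⟨j, hji, hj⟩ : ∃ j ≠ i, localSympl (g s j) (g t j) ≠ 0 := by
    by_contra! hcomm
    refine hanti ?_
    rw [← hg.sympl_eq_zero s t, sympl_eq_sum_localSympl]
    exact (sum_eq_single i (fun j _ hji => hcomm j hji) (by simp)).symm
  exact ⟨j, s, t, hji.symm, hgen, hanti, hj⟩

end IsReducedFamily

namespace IsWeightThreeFamily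

theorem localSympl_add_add_eq_zero (hg : IsWeightThreeFamily g) (h : IsLink g i j s t)
    (hai : a ≠ i) (haj : a ≠ j) (ha : g s a ≠ 0) (u : κ) :
    localSympl (g s i) (g u i) + localSympl (g s j) (g u j) + localSympl (g s a) (g u a) = 0 := by
  rw [← sympl_eq_add_add_of_wt_le_three (hg.wt_le_three s) h.ne hai haj h.apply_left_ne_zero
    h.apply_right_ne_zero ha, hg.sympl_eq_zero]

theorem localSympl_eq_zero_of_isLink (hg : IsWeightThreeFamily g) (h : IsLink g i j s t)
    (hai : a ≠ i) (haj : a ≠ j) (ha : g s a ≠ 0) : localSympl (g s a) (g t a) = 0 := by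
  have hsum := hg.localSympl_add_add_eq_zero h hai haj ha t
  rwa [zmod_two_add_eq_zero h.localSympl_left h.localSympl_right, zero_add] at hsum

theorem apply_eq_of_isLink (hg : IsWeightThreeFamily g) (h : IsLink g i j s t)
    (hai : a ≠ i) (haj : a ≠ j) (hs : g s a ≠ 0) (ht : g t a ≠ 0) : g s a = g t a :=
  eq_of_localSympl_eq_zero hs ht (hg.localSympl_eq_zero_of_isLink h hai haj hs)

theorem localSympl_right_eq_of_apply_left_eq_zero (hg : IsWeightThreeFamily g)
    (h : IsLink g i j s t) (hai : a ≠ i) (haj : a ≠ j) (ha : g s a ≠ 0) (hu : g u i = 0) :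
    localSympl (g s j) (g u j) = localSympl (g s a) (g u a) := by
  have hsum := hg.localSympl_add_add_eq_zero h hai haj ha u
  rwa [hu, localSympl_zero_right, zero_add, CharTwo.add_eq_zero] at hsum

theorem apply_left_eq_zero_of_localSympl_ne_zero (hg : IsWeightThreeFamily g)
    (h : IsLink g i j s t) (hai : a ≠ i) (haj : a ≠ j) (hu : localSympl (g s a) (g u a) ≠ 0) :
    g u i = 0 := by
  refine h.apply_left_eq_zero ?_ ?_ <;> rintro rfl
  · exact hu (localSympl_self _)
  · exact hu (hg.localSympl_eq_zero_of_isLink h hai haj (left_ne_zero_of_localSympl_ne_zero hu))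

theorem localSympl_right_ne_zero (hg : IsWeightThreeFamily g) (h : IsLink g i j s t)
    (hai : a ≠ i) (haj : a ≠ j) (hu : localSympl (g s a) (g u a) ≠ 0) :
    localSympl (g s j) (g u j) ≠ 0 := by
  rwa [hg.localSympl_right_eq_of_apply_left_eq_zero h hai haj
    (left_ne_zero_of_localSympl_ne_zero hu)
    (hg.apply_left_eq_zero_of_localSympl_ne_zero h hai haj hu)]

theorem three_le_card_generatorsAt (hg : IsWeightThreeFamily g) (h : IsLink g i j s t)
    (hs : wt (g s) = 3) : 3 ≤ #(generatorsAt g j) := by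
  obtain ⟨a, hai, haj, ha⟩ := exists_ne_ne_apply_ne_zero hs.ge i j
  obtain ⟨u, hu⟩ := hg.exists_localSympl_ne_zero_of_apply_ne_zero hg.two_le_distG
    h.apply_left_ne_zero ha hai
  have huj : u ∈ generatorsAt g j := mem_generatorsAt.2
    (right_ne_zero_of_localSympl_ne_zero (hg.localSympl_right_ne_zero h hai haj hu))
  have hui : u ∉ generatorsAt g i := fun hui =>
    mem_generatorsAt.1 hui (hg.apply_left_eq_zero_of_localSympl_ne_zero h hai haj hu)
  rw [← Nat.lt_iff_add_one_le, ← h.card_generatorsAt]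
  exact card_lt_card ((ssubset_iff_of_subset h.generatorsAt_subset).2 ⟨u, huj, hui⟩)

end IsWeightThreeFamily

/-! ### Discharging -/

/-- Qubit `i` meets exactly two generators, at least one of them of weight three. -/
def IsHeavy (g : κ → PauliT ι) (i : ι) : Prop :=
  #(generatorsAt g i) = 2 ∧ ∃ s, g s i ≠ 0 ∧ wt (g s) = 3

/-- The qubits meeting exactly two generators, both of weight three. -/
def deficientQubits (g : κ → PauliT ι) : Finset ι :=
  {i | #(generatorsAt g i) = 2 ∧ ∀ s, g s i ≠ 0 → wt (g s) = 3}

/-- The charge which generator `s` sends to a qubit `i` of its support. A generator of weight two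
favours a heavy qubit, which receives only `2` from its other generator. -/
def charge (g : κ → PauliT ι) (s : κ) (i : ι) : ℕ :=
  if wt (g s) = 1 then 6
  else if wt (g s) = 2 then
    if IsHeavy g i then 4 else if #(generatorsAt g i) = 2 then 3 else 2
  else 2

/-- The total charge received by qubit `i`. -/
def receivedCharge (g : κ → PauliT ι) (i : ι) : ℕ := ∑ s ∈ generatorsAt g i, charge g s i

theorem mem_deficientQubits :
    i ∈ deficientQubits g ↔ #(generatorsAt g i) = 2 ∧ ∀ s, g s i ≠ 0 → wt (g s) = 3 := by
  simp [deficientQubits]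

theorem two_le_charge (s : κ) (i : ι) : 2 ≤ charge g s i := by
  unfold charge
  split_ifs <;> decide

theorem two_mul_card_generatorsAt_le_receivedCharge (i : ι) :
    2 * #(generatorsAt g i) ≤ receivedCharge g i := by
  rw [mul_comm, ← smul_eq_mul]
  exact card_nsmul_le_sum _ _ _ fun s _ => two_le_charge s i

theorem six_le_charge_add_charge (hst : s ≠ t) (hi : generatorsAt g i = {s, t})
    (hs : wt (g s) ≤ 3) (ht : wt (g t) ≤ 3) (hdef : i ∉ deficientQubits g) :
    6 ≤ charge g s i + charge g t i := by
  have hcard : #(generatorsAt g i) = 2 := by rw [hi, card_pair hst]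
  have hsi : g s i ≠ 0 := mem_generatorsAt.1 (by simp [hi])
  have hti : g t i ≠ 0 := mem_generatorsAt.1 (by simp [hi])
  have hnot : ¬ (wt (g s) = 3 ∧ wt (g t) = 3) := by
    rintro ⟨hs3, ht3⟩
    refine hdef (mem_deficientQubits.2 ⟨hcard, fun u hu => ?_⟩)
    have hust : u = s ∨ u = t := by simpa [hi] using mem_generatorsAt.2 hu
    rcases hust with rfl | rfl <;> assumption
  have hs0 := wt_pos_of_apply_ne_zero hsi
  have ht0 := wt_pos_of_apply_ne_zero hti
  unfold charge
  by_cases hheavy : IsHeavy g i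
  · simp only [hheavy, if_true]
    split_ifs <;> omega
  · have hs3 : wt (g s) ≠ 3 := fun h => hheavy ⟨hcard, s, hsi, h⟩
    have ht3 : wt (g t) ≠ 3 := fun h => hheavy ⟨hcard, t, hti, h⟩
    simp only [hheavy, hcard, if_true, if_false]
    split_ifs <;> omega

/-- Each `i ∈ D` borrows `b` from its partner `φ i`. -/
theorem mul_card_le_sum_of_discharging {D : Finset ι} {φ : ι → ι} {f : ι → ℕ} {m b : ℕ}
    (h : ∀ j, m + b * #{i ∈ D | φ i = j} ≤ f j + b * if j ∈ D then 1 else 0) :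
    m * Fintype.card ι ≤ ∑ j, f j := by
  have hfib : #D = ∑ j, #{i ∈ D | φ i = j} :=
    card_eq_sum_card_fiberwise fun _ _ => mem_coe.2 (mem_univ _)
  have hsum := sum_le_sum fun j (_ : j ∈ univ) => h j
  simp only [sum_add_distrib, ← mul_sum, ← hfib, sum_const, card_univ, smul_eq_mul, sum_boole,
    filter_univ_mem, Nat.cast_id] at hsum
  rw [mul_comm]
  exact Nat.le_of_add_le_add_right hsum

namespace IsWeightThreeFamily

theorem three_le_card_generatorsAt_of_isHeavy (hg : IsWeightThreeFamily g) (hij : i ≠ j)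
    (ht : suppF (g t) = {i, j}) (hi : IsHeavy g i) : 3 ≤ #(generatorsAt g j) := by
  obtain ⟨hcard, s, hs, hs3⟩ := hi
  have hti : g t i ≠ 0 := mem_suppF.1 (by simp [ht])
  have hts : t ≠ s := by
    rintro rfl
    rw [← card_suppF, ht, card_pair hij] at hs3
    omega
  obtain ⟨j', u, v, huv⟩ := hg.exists_isLink hg.two_le_distG hcard
  obtain ⟨w, hsw⟩ := huv.exists_of_apply_ne_zero hs
  obtain rfl : t = w := (hsw.eq_or_eq hti).resolve_left hts
  have hj' : j' = i ∨ j' = j := by simpa [ht] using mem_suppF.2 hsw.symm.apply_right_ne_zero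
  obtain rfl := hj'.resolve_left hsw.ne.symm
  exact hg.three_le_card_generatorsAt hsw hs3

theorem charge_add_charge_le_six (hg : IsWeightThreeFamily g) (hij : i ≠ j)
    (hs : suppF (g s) = {i, j}) : charge g s i + charge g s j ≤ 6 := by
  have hwt : wt (g s) = 2 := by rw [← card_suppF, hs, card_pair hij]
  have hi := hg.three_le_card_generatorsAt_of_isHeavy hij hs
  have hj := hg.three_le_card_generatorsAt_of_isHeavy hij.symm (hs.trans (pair_comm i j))
  have hi2 : IsHeavy g i → #(generatorsAt g i) = 2 := And.left
  simp only [charge, hwt]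
  split_ifs <;> grind

theorem sum_charge_le_six (hg : IsWeightThreeFamily g) (s : κ) :
    ∑ i ∈ suppF (g s), charge g s i ≤ 6 := by
  by_cases hwt : wt (g s) = 2
  · obtain ⟨i, j, hij, hsupp⟩ := card_eq_two.1 ((card_suppF _).trans hwt)
    rw [hsupp, sum_pair hij]
    exact hg.charge_add_charge_le_six hij hsupp
  · have hcharge : ∀ i, charge g s i = if wt (g s) = 1 then 6 else 2 := by simp [charge, hwt]
    have hle := hg.wt_le_three s
    simp only [hcharge, sum_const, smul_eq_mul, card_suppF]
    split_ifs <;> omega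

theorem sum_receivedCharge_le (hg : IsWeightThreeFamily g) :
    ∑ i, receivedCharge g i ≤ 6 * Fintype.card κ := by
  calc ∑ i, receivedCharge g i = ∑ s, ∑ i ∈ suppF (g s), charge g s i :=
        sum_comm' fun i s => by simp [mem_generatorsAt, mem_suppF]
    _ ≤ ∑ _s : κ, 6 := sum_le_sum fun s _ => hg.sum_charge_le_six s
    _ = 6 * Fintype.card κ := by simp [mul_comm]

theorem six_le_receivedCharge (hg : IsWeightThreeFamily g) (hi : i ∉ deficientQubits g) :
    6 ≤ receivedCharge g i := by
  by_cases hpin : IsPinned g i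
  · obtain ⟨s, hs⟩ := hpin
    have hmem : s ∈ generatorsAt g i := mem_generatorsAt.2 (mem_suppF.1 (by simp [hs]))
    have hwt : wt (g s) = 1 := by rw [← card_suppF, hs, card_singleton]
    calc 6 = charge g s i := by simp [charge, hwt]
      _ ≤ receivedCharge g i :=
        single_le_sum (f := fun s => charge g s i) (fun _ _ => Nat.zero_le _) hmem
  by_cases hcard : #(generatorsAt g i) = 2
  · obtain ⟨s, t, hst, hgen⟩ := card_eq_two.1 hcard
    rw [receivedCharge, hgen, sum_pair hst]
    exact six_le_charge_add_charge hst hgen (hg.wt_le_three s) (hg.wt_le_three t) hi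
  · have htwo := hg.two_le_card_generatorsAt hg.two_le_distG hpin
    have hle := two_mul_card_generatorsAt_le_receivedCharge (g := g) i
    omega

theorem exists_partner (hg : IsWeightThreeFamily g) :
    ∃ φ : ι → ι, ∀ i ∈ deficientQubits g, ∃ s t, IsLink g i (φ i) s t := by
  choose! φ hφ using fun i (hi : i ∈ deficientQubits g) =>
    hg.exists_isLink hg.two_le_distG (mem_deficientQubits.1 hi).1
  exact ⟨φ, hφ⟩

theorem card_le_card_generatorsAt_of_isLink (hg : IsWeightThreeFamily g) {F : Finset ι}
    (hF : ∀ i ∈ F, ∃ s t, IsLink g i j s t) : #F ≤ #(generatorsAt g j) := by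
  refine Nat.le_of_mul_le_mul_right (card_mul_two_le_of_isLink hF fun s hs => ?_) two_pos
  have hsub : {i ∈ F | g s i ≠ 0} ⊆ (suppF (g s)).erase j := fun i hi => by
    obtain ⟨hiF, hsi⟩ := mem_filter.1 hi
    obtain ⟨_, _, h⟩ := hF i hiF
    exact mem_erase.2 ⟨h.ne, mem_suppF.2 hsi⟩
  calc #{i ∈ F | g s i ≠ 0} ≤ #((suppF (g s)).erase j) := card_le_card hsub
    _ = wt (g s) - 1 := card_erase_of_mem (mem_suppF.2 (mem_generatorsAt.1 hs))
    _ ≤ 2 := Nat.sub_le_sub_right (hg.wt_le_three s) 1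

theorem nine_add_card_partners_le (hg : IsWeightThreeFamily g) {φ : ι → ι}
    (hφ : ∀ i ∈ deficientQubits g, ∃ s t, IsLink g i (φ i) s t) (j : ι) :
    9 + #{i ∈ deficientQubits g | φ i = j} ≤
      2 * receivedCharge g j + if j ∈ deficientQubits g then 1 else 0 := by
  have hlink : ∀ i ∈ ({i ∈ deficientQubits g | φ i = j} : Finset ι), ∃ s t, IsLink g i j s t := by
    simp only [mem_filter]
    rintro i ⟨hi, rfl⟩
    exact hφ i hi
  have hthree : 0 < #{i ∈ deficientQubits g | φ i = j} → 3 ≤ #(generatorsAt g j) := fun hpos => by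
    obtain ⟨i, hi⟩ := card_pos.1 hpos
    obtain ⟨s, t, h⟩ := hlink i hi
    exact hg.three_le_card_generatorsAt h
      ((mem_deficientQubits.1 (mem_filter.1 hi).1).2 s h.apply_left_ne_zero)
  have hle := hg.card_le_card_generatorsAt_of_isLink hlink
  have hreceived := two_mul_card_generatorsAt_le_receivedCharge (g := g) j
  split_ifs with hj
  · have htwo := (mem_deficientQubits.1 hj).1
    omega
  · have hsix := hg.six_le_receivedCharge hj
    omega

theorem three_mul_card_le (hg : IsWeightThreeFamily g) :
    3 * Fintype.card ι ≤ 4 * Fintype.card κ := by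
  obtain ⟨φ, hφ⟩ := hg.exists_partner
  have hnine : 9 * Fintype.card ι ≤ ∑ j, 2 * receivedCharge g j :=
    mul_card_le_sum_of_discharging (b := 1)
      (by simpa only [one_mul] using hg.nine_add_card_partners_le hφ)
  have htotal := hg.sum_receivedCharge_le
  rw [← mul_sum] at hnine
  omega

end IsWeightThreeFamily

/-! ### Distance at least three -/

namespace IsReducedFamily

theorem exists_localSympl_add_ne_zero (hg : IsReducedFamily g)
    (hd : 3 ≤ distG (Submodule.span (ZMod 2) (Set.range g))) (hi : i ∈ deficientQubits g)
    (hij : i ≠ j) {p : ZMod 2 × ZMod 2} (hp : p ≠ 0) (q : ZMod 2 × ZMod 2) :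
    ∃ s, localSympl p (g s i) + localSympl q (g s j) ≠ 0 := by
  by_contra! hcomm
  set x : PauliT ι := Pi.single i p + Pi.single j q with hx
  have hwt : wt x ≤ 2 := by
    refine (wt_le_card (S := {i, j}) fun l hl => ?_).trans card_le_two
    simp only [mem_insert, mem_singleton, not_or] at hl
    simp [hx, hl.1, hl.2]
  have hmem : x ∈ Submodule.span (ZMod 2) (Set.range g) := by
    refine mem_of_inDual_of_wt_lt_distG (inDual_span_range fun s => ?_) ?_
    · rw [sympl_comm, hx, sympl_add_left, sympl_single_left, sympl_single_left, hcomm]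
    · exact lt_of_lt_of_le (by exact_mod_cast hwt.trans_lt (Nat.lt_succ_self 2)) hd
  obtain ⟨s, hsi, hs⟩ := hg.exists_wt_le (i := i) hmem (by simpa [hx, hij] using hp)
  have hs3 := (mem_deficientQubits.1 hi).2 s hsi
  omega

theorem exists_isLink_of_mem_deficientQubits (hg : IsReducedFamily g)
    (hd : 2 ≤ distG (Submodule.span (ZMod 2) (Set.range g))) (hi : i ∈ deficientQubits g)
    (hs : g s i ≠ 0) : ∃ j t, IsLink g i j s t := by
  obtain ⟨j, u, v, h⟩ := hg.exists_isLink hd (mem_deficientQubits.1 hi).1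
  exact ⟨j, h.exists_of_apply_ne_zero hs⟩

theorem eq_of_mem_deficientQubits (hg : IsReducedFamily g)
    (hd : 3 ≤ distG (Submodule.span (ZMod 2) (Set.range g))) (hi : i ∈ deficientQubits g)
    (ha : a ∈ deficientQubits g) (hsi : g s i ≠ 0) (hsa : g s a ≠ 0) : i = a := by
  by_contra hia
  have hd2 : 2 ≤ distG (Submodule.span (ZMod 2) (Set.range g)) := le_trans (by norm_num) hd
  obtain ⟨_, t, ht⟩ := hg.exists_isLink_of_mem_deficientQubits hd2 hi hsi
  obtain ⟨_, u, hu⟩ := hg.exists_isLink_of_mem_deficientQubits hd2 ha hsa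
  obtain ⟨v, hv⟩ := hg.exists_localSympl_add_ne_zero hd hi hia
    ht.symm.apply_left_ne_zero (g u a)
  refine hv ?_
  by_cases hvs : v = s
  · exact zmod_two_add_eq_zero (ht.localSympl_ne_zero_iff.2 hvs) (hu.localSympl_ne_zero_iff.2 hvs)
  · rw [not_ne_iff.1 (mt ht.localSympl_ne_zero_iff.1 hvs),
      not_ne_iff.1 (mt hu.localSympl_ne_zero_iff.1 hvs), add_zero]

/-- If `j` met only one generator `u` besides those of `i`, a two-qubit error acting as `u` on `j`
and suitably on `i` would be undetected. -/
theorem card_generatorsAt_ne_three (hg : IsReducedFamily g)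
    (hd : 3 ≤ distG (Submodule.span (ZMod 2) (Set.range g))) (hi : i ∈ deficientQubits g)
    (h : IsLink g i j s t) : #(generatorsAt g j) ≠ 3 := by
  intro hcard
  obtain ⟨u, hu⟩ : ∃ u, generatorsAt g j \ generatorsAt g i = {u} := by
    rw [← card_eq_one, card_sdiff_of_subset h.generatorsAt_subset, hcard, h.card_generatorsAt]
  have huj : g u j ≠ 0 :=
    mem_generatorsAt.1 (mem_sdiff.1 (hu ▸ mem_singleton_self u)).1
  obtain ⟨p, hps, hpt⟩ := exists_localSympl_eq_and_eq h.localSympl_left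
    (localSympl (g u j) (g s j)) (localSympl (g u j) (g t j))
  have hp : p ≠ 0 := by
    rcases localSympl_ne_zero_or_of_ne_zero h.localSympl_right huj with hs | ht
    · exact left_ne_zero_of_localSympl_ne_zero (hps ▸ localSympl_comm (g s j) _ ▸ hs)
    · exact left_ne_zero_of_localSympl_ne_zero (hpt ▸ localSympl_comm (g t j) _ ▸ ht)
  obtain ⟨v, hv⟩ := hg.exists_localSympl_add_ne_zero hd hi h.ne hp (g u j)
  refine hv ?_
  by_cases hvi : g v i = 0
  · rw [hvi, localSympl_zero_right, zero_add]
    by_cases hvj : g v j = 0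
    · rw [hvj, localSympl_zero_right]
    · have hvu : v ∈ generatorsAt g j \ generatorsAt g i := by simp [mem_generatorsAt, hvi, hvj]
      rw [hu, mem_singleton] at hvu
      rw [hvu, localSympl_self]
  · rw [CharTwo.add_eq_zero]
    rcases h.eq_or_eq hvi with hvs | hvt
    exacts [hvs ▸ hps, hvt ▸ hpt]

end IsReducedFamily

namespace IsWeightThreeFamily

theorem apply_right_eq_add_of_isLink (hg : IsWeightThreeFamily g) (h : IsLink g i j s t)
    (hai : a ≠ i) (haj : a ≠ j) (hta : g t a ≠ 0) (hu : localSympl (g s a) (g u a) ≠ 0) :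
    g u j = g s j + g t j := by
  have hst := hg.apply_eq_of_isLink h hai haj (left_ne_zero_of_localSympl_ne_zero hu) hta
  exact eq_add_of_localSympl_ne_zero h.localSympl_right
    (hg.localSympl_right_ne_zero h hai haj hu)
    (hg.localSympl_right_ne_zero h.symm hai haj (hst ▸ hu))

theorem apply_eq_zero_of_isLink_isLink {i' : ι} (hg : IsWeightThreeFamily g)
    (h : IsLink g i j s t) (h' : IsLink g i' j u v) (hai : a ≠ i) (hai' : a ≠ i') (haj : a ≠ j)
    (hvi : g v i = 0) (hsu : localSympl (g s a) (g u a) ≠ 0) : g t a = 0 := by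
  by_contra hta
  have hsa := left_ne_zero_of_localSympl_ne_zero hsu
  have huj := hg.apply_right_eq_add_of_isLink h hai haj hta hsu
  by_cases hva : g v a = 0
  · have hs : localSympl (g s j) (g v j) = 0 := by
      rw [hg.localSympl_right_eq_of_apply_left_eq_zero h hai haj hsa hvi, hva,
        localSympl_zero_right]
    have ht : localSympl (g t j) (g v j) = 0 := by
      rw [hg.localSympl_right_eq_of_apply_left_eq_zero h.symm hai haj hta hvi, hva,
        localSympl_zero_right]
    exact (localSympl_ne_zero_or_of_ne_zero h.localSympl_right h'.symm.apply_right_ne_zero).elim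
      (· hs) (· ht)
  · have huv := hg.apply_eq_of_isLink h' hai' haj (right_ne_zero_of_localSympl_ne_zero hsu) hva
    have hvj := hg.apply_right_eq_add_of_isLink h hai haj hta (huv ▸ hsu)
    exact h'.localSympl_right (by rw [huj, hvj, localSympl_self])

theorem generatorsAt_eq_pair_of_isLink_isLink {i' : ι} (hg : IsWeightThreeFamily g)
    (h : IsLink g i j s t) (h' : IsLink g i' j u v)
    (hdisj : Disjoint (generatorsAt g i) (generatorsAt g i'))
    (hgen : generatorsAt g j = generatorsAt g i ∪ generatorsAt g i')
    (hai : a ≠ i) (hai' : a ≠ i') (haj : a ≠ j) (hsu : localSympl (g s a) (g u a) ≠ 0) :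
    generatorsAt g a = {s, u} := by
  have hus : localSympl (g u a) (g s a) ≠ 0 := localSympl_comm (g s a) _ ▸ hsu
  have hvi : g v i = 0 := by_contra fun hvi => disjoint_left.1 hdisj (mem_generatorsAt.2 hvi)
    (mem_generatorsAt.2 h'.symm.apply_left_ne_zero)
  have hti' : g t i' = 0 := by_contra fun hti' => disjoint_left.1 hdisj
    (mem_generatorsAt.2 h.symm.apply_left_ne_zero) (mem_generatorsAt.2 hti')
  have hta : g t a = 0 := hg.apply_eq_zero_of_isLink_isLink h h' hai hai' haj hvi hsu
  have hva : g v a = 0 := hg.apply_eq_zero_of_isLink_isLink h' h hai' hai haj hti' hus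
  have hsub : generatorsAt g a ⊆ generatorsAt g j := fun x hx => mem_generatorsAt.2 <| by
    rcases localSympl_ne_zero_or_of_ne_zero hsu (mem_generatorsAt.1 hx) with hsx | hux
    · exact right_ne_zero_of_localSympl_ne_zero (hg.localSympl_right_ne_zero h hai haj hsx)
    · exact right_ne_zero_of_localSympl_ne_zero (hg.localSympl_right_ne_zero h' hai' haj hux)
  ext x
  simp only [mem_insert, mem_singleton]
  constructor
  · intro hx
    have hmem := hsub hx
    simp only [hgen, h.generatorsAt_eq, h'.generatorsAt_eq, mem_union, mem_insert,
      mem_singleton] at hmem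
    rw [mem_generatorsAt] at hx
    grind
  · rintro (rfl | rfl) <;> rw [mem_generatorsAt]
    exacts [left_ne_zero_of_localSympl_ne_zero hsu, right_ne_zero_of_localSympl_ne_zero hsu]

theorem eq_of_isLink_of_isLink_of_card_eq_four {i' : ι} {s' t' : κ} (hg : IsWeightThreeFamily g)
    (hd : 3 ≤ distG (Submodule.span (ZMod 2) (Set.range g)))
    (hi : i ∈ deficientQubits g) (hi' : i' ∈ deficientQubits g) (hj : #(generatorsAt g j) = 4)
    (h : IsLink g i j s t) (h' : IsLink g i' j s' t') : i = i' := by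
  by_contra hii'
  have hdisj : Disjoint (generatorsAt g i) (generatorsAt g i') := disjoint_left.2 fun x hx hx' =>
    hii' (hg.eq_of_mem_deficientQubits hd hi hi' (mem_generatorsAt.1 hx) (mem_generatorsAt.1 hx'))
  have hgen : generatorsAt g j = generatorsAt g i ∪ generatorsAt g i' := by
    refine (eq_of_subset_of_card_le
      (union_subset h.generatorsAt_subset h'.generatorsAt_subset) ?_).symm
    rw [card_union_of_disjoint hdisj, h.card_generatorsAt, h'.card_generatorsAt, hj]
  obtain ⟨a, hai, haj, hsa⟩ :=
    exists_ne_ne_apply_ne_zero ((mem_deficientQubits.1 hi).2 s h.apply_left_ne_zero).ge i j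
  have hai' : a ≠ i' := by
    rintro rfl
    exact hii' (hg.eq_of_mem_deficientQubits hd hi hi' h.apply_left_ne_zero hsa)
  obtain ⟨u, hsu⟩ := hg.exists_localSympl_ne_zero_of_apply_ne_zero hg.two_le_distG
    h.apply_left_ne_zero hsa hai
  have hui : g u i = 0 := hg.apply_left_eq_zero_of_localSympl_ne_zero h hai haj hsu
  have hui' : g u i' ≠ 0 := by
    have huj : u ∈ generatorsAt g j := mem_generatorsAt.2
      (right_ne_zero_of_localSympl_ne_zero (hg.localSympl_right_ne_zero h hai haj hsu))
    rw [hgen, mem_union, mem_generatorsAt, mem_generatorsAt] at huj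
    exact huj.resolve_left (not_ne_iff.2 hui)
  obtain ⟨v, huv⟩ := h'.exists_of_apply_ne_zero hui'
  have hgena := hg.generatorsAt_eq_pair_of_isLink_isLink h huv hdisj hgen hai hai' haj hsu
  have ha : a ∈ deficientQubits g := by
    refine mem_deficientQubits.2 ⟨?_, fun x hx => ?_⟩
    · rw [hgena, card_pair (by rintro rfl; exact hsu (localSympl_self _))]
    · have hxsu : x = s ∨ x = u := by simpa [hgena] using mem_generatorsAt.2 hx
      rcases hxsu with rfl | rfl
      exacts [(mem_deficientQubits.1 hi).2 _ h.apply_left_ne_zero,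
        (mem_deficientQubits.1 hi').2 _ hui']
  exact hai (hg.eq_of_mem_deficientQubits hd ha hi hsa h.apply_left_ne_zero)

theorem six_add_card_partners_le (hg : IsWeightThreeFamily g)
    (hd : 3 ≤ distG (Submodule.span (ZMod 2) (Set.range g))) {φ : ι → ι}
    (hφ : ∀ i ∈ deficientQubits g, ∃ s t, IsLink g i (φ i) s t) (j : ι) :
    6 + 2 * #{i ∈ deficientQubits g | φ i = j} ≤
      receivedCharge g j + 2 * if j ∈ deficientQubits g then 1 else 0 := by
  set F : Finset ι := {i ∈ deficientQubits g | φ i = j}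
  have hdef : ∀ i ∈ F, i ∈ deficientQubits g := fun i hi => (mem_filter.1 hi).1
  have hlink : ∀ i ∈ F, ∃ s t, IsLink g i j s t := fun i hi =>
    (mem_filter.1 hi).2 ▸ hφ i (hdef i hi)
  have hhalf : #F * 2 ≤ #(generatorsAt g j) * 1 := by
    refine card_mul_two_le_of_isLink hlink fun s _ => card_le_one.2 fun i hi a ha => ?_
    rw [mem_filter] at hi ha
    exact hg.eq_of_mem_deficientQubits hd (hdef i hi.1) (hdef a ha.1) hi.2 ha.2
  have hfour : 0 < #F → 4 ≤ #(generatorsAt g j) := fun hpos => by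
    obtain ⟨i, hi⟩ := card_pos.1 hpos
    obtain ⟨s, t, h⟩ := hlink i hi
    have hne := hg.card_generatorsAt_ne_three hd (hdef i hi) h
    have hthree := hg.three_le_card_generatorsAt h
      ((mem_deficientQubits.1 (hdef i hi)).2 s h.apply_left_ne_zero)
    omega
  have hone : #(generatorsAt g j) = 4 → #F ≤ 1 := fun hj => card_le_one.2 fun i hi a ha => by
    obtain ⟨s, t, h⟩ := hlink i hi
    obtain ⟨u, v, h'⟩ := hlink a ha
    exact hg.eq_of_isLink_of_isLink_of_card_eq_four hd (hdef i hi) (hdef a ha) hj h h'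
  have hreceived := two_mul_card_generatorsAt_le_receivedCharge (g := g) j
  split_ifs with hj
  · have htwo := (mem_deficientQubits.1 hj).1
    omega
  · have hsix := hg.six_le_receivedCharge hj
    omega

theorem card_le_card_of_three_le_distG (hg : IsWeightThreeFamily g)
    (hd : 3 ≤ distG (Submodule.span (ZMod 2) (Set.range g))) :
    Fintype.card ι ≤ Fintype.card κ := by
  obtain ⟨φ, hφ⟩ := hg.exists_partner
  have hsix : 6 * Fintype.card ι ≤ ∑ j, receivedCharge g j :=
    mul_card_le_sum_of_discharging (hg.six_add_card_partners_le hd hφ)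
  have htotal := hg.sum_receivedCharge_le
  omega

end IsWeightThreeFamily

/-! ### Stabilizer groups of weight at most three -/

theorem exists_isBasisFam_of_Wgt_le {G : Submodule (ZMod 2) (PauliT ι)} {w : ℕ}
    (hW : Wgt G ≤ w) :
    ∃ (r : ℕ) (g : Fin r → PauliT ι), IsBasisFam G g ∧ ∀ s, wt (g s) ≤ w := by
  have hlt : Wgt G < (w + 1 : ℕ) := hW.trans_lt (by exact_mod_cast Nat.lt_succ_self w)
  simp only [Wgt, iInf_lt_iff] at hlt
  obtain ⟨r, g, hg, hsup⟩ := hlt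
  refine ⟨r, g, hg, fun s => Nat.le_of_lt_succ ?_⟩
  exact_mod_cast (le_sup (f := fun s => (wt (g s) : ℕ∞)) (mem_univ s)).trans_lt hsup

theorem Wgt_bot : Wgt (⊥ : Submodule (ZMod 2) (PauliT ι)) = 0 := by
  have hbasis : IsBasisFam (⊥ : Submodule (ZMod 2) (PauliT ι)) (Fin.elim0 : Fin 0 → PauliT ι) :=
    ⟨linearIndependent_empty_type, by simp [Set.range_eq_empty]⟩
  exact le_bot_iff.1 (iInf_le_of_le 0 (iInf_le_of_le _ (iInf_le_of_le hbasis (by simp))))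

theorem exists_isWeightThreeFamily {G : Submodule (ZMod 2) (PauliT ι)} (hG : IsStabilizer G)
    (hd : 2 ≤ distG G) (hW : Wgt G ≤ 3) :
    ∃ g : Fin (Module.finrank (ZMod 2) G) → PauliT ι,
      Submodule.span (ZMod 2) (Set.range g) = G ∧ IsWeightThreeFamily g := by
  obtain ⟨r, g₀, ⟨hli, hspan₀⟩, hwt⟩ := exists_isBasisFam_of_Wgt_le (w := 3) hW
  obtain rfl : r = Module.finrank (ZMod 2) G := by
    rw [← hspan₀, finrank_span_eq_card hli, Fintype.card_fin]
  obtain ⟨g, hspan, hle, hmin⟩ :=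
    exists_span_eq_and_forall_le_sum_smul (K := ZMod 2) (wt (ι := ι)) g₀
  have hgG : Submodule.span (ZMod 2) (Set.range g) = G := hspan.trans hspan₀
  have hmem : ∀ s, g s ∈ G := fun s => hgG ▸ Submodule.subset_span ⟨s, rfl⟩
  refine ⟨g, hgG, ⟨fun s t => hG _ (hmem s) _ (hmem t), hmin⟩, fun s => ?_, hgG.symm ▸ hd⟩
  exact (hle s).trans (hwt s)

theorem weight_three_codes_general {k : ℕ} (hk : 1 ≤ k) {G : Submodule (ZMod 2) (PauliT ι)}
    (hG : IsStabilizer G) (hdim : Module.finrank (ZMod 2) G + k = Fintype.card ι)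
    (hd : 2 ≤ distG G) (hW : Wgt G ≤ 3) : distG G = 2 ∧ 4 * k ≤ Fintype.card ι := by
  obtain ⟨g, hspan, hg⟩ := exists_isWeightThreeFamily hG hd hW
  have hrate := hg.three_mul_card_le
  rw [Fintype.card_fin] at hrate
  refine ⟨(hd.eq_or_lt.resolve_right fun hlt => ?_).symm, by omega⟩
  have hthree : 3 ≤ distG G := Order.add_one_le_of_lt hlt
  have hcard := hg.card_le_card_of_three_le_distG (hspan.symm ▸ hthree)
  rw [Fintype.card_fin] at hcard
  omega

end WeightThree

/-- a stabilizer code with parameters `[[n,k,d;3]]`, `k ≥ 1`, `d ≥ 2`,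
has `d = 2` and rate `k/n ≤ 1/4`. -/
theorem weight_three_codes (n k : ℕ) (d : ℕ∞) (hk : 1 ≤ k) (hd : 2 ≤ d)
    (G : Submodule (ZMod 2) (Pauli n)) (hG : IsStabilizer G)
    (hdim : Module.finrank (ZMod 2) ↥G = n - k) (hdist : distG G = d)
    (hW : Wgt G = 3) :
    d = 2 ∧ 4 * k ≤ n := by
  have hne : Module.finrank (ZMod 2) G ≠ 0 := fun h => by
    simp [Submodule.finrank_eq_zero.1 h, Wgt_bot] at hW
  have hcard : Module.finrank (ZMod 2) G + k = Fintype.card (Fin n) := by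
    rw [Fintype.card_fin]
    omega
  subst hdist
  simpa using weight_three_codes_general hk hG hcard hd hW.le

end
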